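/- Fix integers d ≥ 2 and n ≥ 1, set r = d mod 2 and c(k) = exp(−iπ k(k+r)/d). Let P_X and P_Z be the (n+1)-fold tensor powers of X_d and Z_d respectively, realized as matrices indexed by (Fin (n+1) → Fin d) with entries P_X(f,g) = ∏_{i} X_d(f i, g i) and P_Z(f,g) = ∏_{i} Z_d(f i, g i). Then the encryption operator U_enc = ((1/√d) ∑_{k=0}^{d−1} c(k) P_X^k) · ((1/√d) ∑_{l=0}^{d−1} c(l) P_Z^l) is unitary. -/

import Mathlib

open Matrix Kronecker Complex

noncomputable section

/-- The generalized shift (Pauli X) operator on `ℂ^d`: `X_d(j,k) = 1` iff `j = k+1 (mod d)`. -/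
def Xd (d : ℕ) : Matrix (Fin d) (Fin d) ℂ :=
  Matrix.of fun j k => if (j : ℕ) = ((k : ℕ) + 1) % d then 1 else 0

/-- The generalized phase (Pauli Z) operator on `ℂ^d`: `Z_d(j,k) = ω^k` iff `j = k`,
where `ω = exp(2πi/d)`. -/
def Zd (d : ℕ) : Matrix (Fin d) (Fin d) ℂ :=
  Matrix.of fun j k =>
    if j = k then Complex.exp (2 * Real.pi * Complex.I * (k : ℕ) / d) else 0

/-- The generalized Bell state `Φ_d ∈ ℂ^{Fin d × Fin d}`, `Φ_d(p,q) = δ_{p,q}/√d`. -/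
def Bell (d : ℕ) : Fin d × Fin d → ℂ :=
  fun p => if p.1 = p.2 then 1 / (Real.sqrt d : ℂ) else 0

/-- The Chu sequence `c(k) = exp(−iπ k(k + (d mod 2))/d)`. -/
def chu (d k : ℕ) : ℂ :=
  Complex.exp (-(Real.pi * Complex.I * (k : ℂ) * ((k : ℂ) + ((d % 2 : ℕ) : ℂ)) / d))

/-- The `m`-fold tensor (Kronecker) power of a `d×d` matrix, as a matrix
indexed by `Fin m → Fin d`: entries `(f,g) ↦ ∏ i, M (f i) (g i)`. -/
def tpow (d m : ℕ) (M : Matrix (Fin d) (Fin d) ℂ) :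
    Matrix (Fin m → Fin d) (Fin m → Fin d) ℂ :=
  Matrix.of fun f g => ∏ i, M (f i) (g i)


theorem sum_shift {M : Type*} [AddCommGroup M] (d : ℕ) (F : ℕ → M) (hF : ∀ k, F (k + d) = F k)
    (j : ℕ) : ∑ k ∈ Finset.range d, F k = ∑ m ∈ Finset.range d, F (j + m) := by
  induction j with
  | zero => simp
  | succ j ih =>
    rw [ih]
    have h1 := Finset.sum_range_succ (fun m => F (j + m)) d
    have h2 := Finset.sum_range_succ' (fun m => F (j + m)) d
    rw [h1, hF] at h2
    simp only [add_zero] at h2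
    rw [add_right_cancel h2]
    refine Finset.sum_congr rfl fun m _ => ?_
    congr 1
    ring

theorem chu_periodic (d : ℕ) (hd : 2 ≤ d) (k : ℕ) : chu d (k + d) = chu d k := by
  have hd0 : (d : ℂ) ≠ 0 := by exact_mod_cast (by omega : d ≠ 0)
  obtain ⟨t, ht⟩ : ∃ t : ℕ, d + d % 2 = 2 * t := ⟨(d + d % 2) / 2, by omega⟩
  have ht' : (d : ℂ) + ((d % 2 : ℕ) : ℂ) = 2 * t := by exact_mod_cast ht
  unfold chu
  rw [Complex.exp_eq_exp_iff_exists_int]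
  refine ⟨-((k : ℤ) + t), ?_⟩
  have hr : ((d % 2 : ℕ) : ℂ) = 2 * t - d := by linear_combination ht'
  rw [hr]
  push_cast
  field_simp
  ring

theorem chu_corr (d : ℕ) (hd : 2 ≤ d) (j m : ℕ) :
    star (chu d j) * chu d (j + m) =
      chu d m * (Complex.exp (2 * Real.pi * Complex.I / d) ^ m)⁻¹ ^ j := by
  have hd0 : (d : ℂ) ≠ 0 := by exact_mod_cast (by omega : d ≠ 0)
  unfold chu
  rw [Complex.star_def, ← Complex.exp_conj, ← Complex.exp_nat_mul, ← Complex.exp_neg,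
    ← Complex.exp_nat_mul, ← Complex.exp_add, ← Complex.exp_add]
  congr 1
  simp only [map_neg, map_div₀, map_mul, map_add, Complex.conj_ofReal, Complex.conj_I,
    Complex.conj_natCast]
  push_cast
  field_simp
  ring

theorem chu_sum (d : ℕ) (hd : 2 ≤ d) (m : ℕ) (hm : m < d) :
    ∑ j ∈ Finset.range d, star (chu d j) * chu d (j + m) = if m = 0 then (d : ℂ) else 0 := by
  simp only [chu_corr d hd, ← Finset.mul_sum]
  have hp := Complex.isPrimitiveRoot_exp d (by omega)
  split_ifs with h
  · subst h
    simp [chu]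
  · have h1 : (Complex.exp (2 * Real.pi * Complex.I / d) ^ m)⁻¹ ≠ 1 := by
      intro h1
      exact hp.pow_ne_one_of_pos_of_lt h hm (inv_eq_one.mp h1)
    rw [geom_sum_eq h1, inv_pow, ← pow_mul, mul_comm m d, pow_mul, hp.pow_eq_one]
    simp

theorem chu_comb_unitary {N : Type*} [Fintype N] [DecidableEq N] (d : ℕ) (hd : 2 ≤ d)
    (P : Matrix N N ℂ) (hP : star P * P = 1) (hPd : P ^ d = 1) :
    ((Real.sqrt d : ℂ))⁻¹ • ∑ k ∈ Finset.range d, chu d k • P ^ k ∈ Matrix.unitaryGroup N ℂ := by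
  have hd0 : (d : ℂ) ≠ 0 := by exact_mod_cast (by omega : d ≠ 0)
  have hPU : P ∈ Matrix.unitaryGroup N ℂ := Matrix.mem_unitaryGroup_iff'.mpr hP
  have hpow : ∀ j : ℕ, star (P ^ j) * P ^ j = 1 := fun j =>
    Matrix.mem_unitaryGroup_iff'.mp (pow_mem hPU j)
  rw [Matrix.mem_unitaryGroup_iff']
  have key : star (∑ k ∈ Finset.range d, chu d k • P ^ k) *
      (∑ k ∈ Finset.range d, chu d k • P ^ k) = (d : ℂ) • (1 : Matrix N N ℂ) := by
    rw [star_sum, Finset.sum_mul]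
    have : ∀ j ∈ Finset.range d, star (chu d j • P ^ j) * (∑ k ∈ Finset.range d, chu d k • P ^ k)
        = ∑ m ∈ Finset.range d, (star (chu d j) * chu d (j + m)) • P ^ m := by
      intro j _
      rw [sum_shift d (fun k => chu d k • P ^ k)
        (fun k => by simp only [chu_periodic d hd, pow_add, hPd, mul_one]) j, Finset.mul_sum]
      refine Finset.sum_congr rfl fun m _ => ?_
      rw [star_smul, smul_mul_smul_comm, pow_add, ← mul_assoc, hpow, one_mul]
    rw [Finset.sum_congr rfl this, Finset.sum_comm]
    simp only [← Finset.sum_smul]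
    rw [Finset.sum_congr rfl (fun m hm => by rw [chu_sum d hd m (Finset.mem_range.mp hm)])]
    rw [Finset.sum_eq_single 0]
    · simp
    · intro b _ hb
      simp [hb]
    · intro h
      exact absurd (Finset.mem_range.mpr (by omega)) h
  rw [star_smul, smul_mul_smul_comm, key, smul_smul]
  have hs : (Real.sqrt d : ℂ) * (Real.sqrt d : ℂ) = d := by
    rw [← Complex.ofReal_mul, Real.mul_self_sqrt (Nat.cast_nonneg d)]
    simp
  have : star ((Real.sqrt d : ℂ))⁻¹ * ((Real.sqrt d : ℂ))⁻¹ * d = 1 := by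
    rw [Complex.star_def, map_inv₀, Complex.conj_ofReal, ← mul_inv, hs, inv_mul_cancel₀ hd0]
  rw [this, one_smul]

theorem tpow_mul (d m : ℕ) (M N : Matrix (Fin d) (Fin d) ℂ) :
    tpow d m M * tpow d m N = tpow d m (M * N) := by
  ext f g
  simp only [tpow, Matrix.mul_apply, Matrix.of_apply, Finset.prod_univ_sum, Fintype.piFinset_univ,
    Finset.prod_mul_distrib]

theorem tpow_one (d m : ℕ) : tpow d m 1 = 1 := by
  ext f g
  simp only [tpow, Matrix.of_apply, Matrix.one_apply]
  rw [Finset.prod_ite_zero]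
  simp [funext_iff]

theorem tpow_pow (d m : ℕ) (M : Matrix (Fin d) (Fin d) ℂ) (k : ℕ) :
    tpow d m M ^ k = tpow d m (M ^ k) := by
  induction k with
  | zero => simp [tpow_one]
  | succ k ih => rw [pow_succ, ih, tpow_mul, pow_succ]

theorem tpow_star (d m : ℕ) (M : Matrix (Fin d) (Fin d) ℂ) :
    star (tpow d m M) = tpow d m (star M) := by
  ext f g
  simp [tpow, Matrix.star_apply]

theorem Xd_pow (d : ℕ) (hd : 2 ≤ d) (k : ℕ) (j l : Fin d) :
    (Xd d ^ k) j l = if (j : ℕ) = ((l : ℕ) + k) % d then 1 else 0 := by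
  induction k generalizing j with
  | zero => simp [Matrix.one_apply, Fin.ext_iff, Nat.mod_eq_of_lt l.2]
  | succ k ih =>
    rw [pow_succ', Matrix.mul_apply, Finset.sum_eq_single ⟨((l : ℕ) + k) % d, Nat.mod_lt _ (by omega)⟩]
    · rw [ih]
      simp [Xd, add_assoc]
    · intro b _ hb
      rw [ih, if_neg, mul_zero]
      intro h
      exact hb (Fin.ext h)
    · simp

theorem Xd_star (d : ℕ) (hd : 2 ≤ d) : star (Xd d) * Xd d = 1 := by
  ext j l
  rw [Matrix.mul_apply, Finset.sum_eq_single ⟨((l : ℕ) + 1) % d, Nat.mod_lt _ (by omega)⟩]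
  · simp only [Matrix.star_apply, Xd, Matrix.of_apply, Matrix.one_apply, if_true, mul_one]
    have : (((l : ℕ) + 1) % d = ((j : ℕ) + 1) % d) ↔ j = l := by
      constructor
      · intro h
        have h2 : (l : ℕ) ≡ j [MOD d] := Nat.ModEq.add_right_cancel' 1 h
        exact Fin.ext (Nat.ModEq.eq_of_lt_of_lt h2 l.2 j.2).symm
      · rintro rfl
        rfl
    simp only [this]
    split_ifs <;> simp
  · intro b _ hb
    have : ¬ (b : ℕ) = ((l : ℕ) + 1) % d := fun h => hb (Fin.ext h)
    simp [Xd, this]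
  · simp

theorem Zd_eq (d : ℕ) : Zd d =
    Matrix.diagonal fun k : Fin d => Complex.exp (2 * Real.pi * Complex.I * (k : ℕ) / d) := by
  ext j k
  by_cases h : j = k
  · subst h
    simp [Zd]
  · simp [Zd, h]

theorem Zd_pow (d : ℕ) (hd : 2 ≤ d) : Zd d ^ d = 1 := by
  have hd0 : (d : ℂ) ≠ 0 := by exact_mod_cast (by omega : d ≠ 0)
  rw [Zd_eq, Matrix.diagonal_pow, ← Matrix.diagonal_one]
  congr 1
  funext k
  simp only [Pi.pow_apply]
  rw [← Complex.exp_nat_mul, Complex.exp_eq_one_iff]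
  refine ⟨(k : ℕ), ?_⟩
  push_cast
  field_simp

theorem Zd_star (d : ℕ) : star (Zd d) * Zd d = 1 := by
  rw [Zd_eq, Matrix.star_eq_conjTranspose, Matrix.diagonal_conjTranspose,
    Matrix.diagonal_mul_diagonal, ← Matrix.diagonal_one]
  congr 1
  funext k
  simp only [Pi.star_apply]
  rw [Complex.star_def, ← Complex.exp_conj, ← Complex.exp_add, ← Complex.exp_zero]
  congr 1
  simp only [map_div₀, map_mul, Complex.conj_ofReal, Complex.conj_I, Complex.conj_natCast,
    Complex.conj_ofNat]
  ring

/-- The encryption operator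
`U_enc = ((1/√d) ∑_k c(k) P_X^k)((1/√d) ∑_l c(l) P_Z^l)` is unitary, where
`P_X`, `P_Z` are the `(n+1)`-fold tensor powers of `X_d`, `Z_d`. -/
theorem Uenc_unitary (d n : ℕ) (hd : 2 ≤ d) (hn : 1 ≤ n) :
    ((((Real.sqrt d : ℂ))⁻¹ • ∑ k ∈ Finset.range d, chu d k • tpow d (n + 1) (Xd d) ^ k) *
        (((Real.sqrt d : ℂ))⁻¹ • ∑ l ∈ Finset.range d, chu d l • tpow d (n + 1) (Zd d) ^ l))
      ∈ Matrix.unitaryGroup (Fin (n + 1) → Fin d) ℂ := by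
  have hX : Xd d ^ d = 1 := by
    ext j l
    rw [Xd_pow d hd]
    simp [Matrix.one_apply, Fin.ext_iff, Nat.mod_eq_of_lt l.2]
  refine mul_mem ?_ ?_
  · exact chu_comb_unitary d hd _ (by rw [tpow_star, tpow_mul, Xd_star d hd, tpow_one])
      (by rw [tpow_pow, hX, tpow_one])
  · exact chu_comb_unitary d hd _ (by rw [tpow_star, tpow_mul, Zd_star d, tpow_one])
      (by rw [tpow_pow, Zd_pow d hd, tpow_one])
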